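/- Let u, v be real numbers with 0 < u < v < 1. Then lim_{n→∞} (1/n) · ∑_{p prime, u ≤ {n/p} < v} ln p = ψ(v) − ψ(u), where the sum is over primes p such that the fractional part {n/p} of n/p lies in [u, v), and ψ(x) = Γ′(x)/Γ(x) is the logarithmic derivative of the gamma function. -/

import Mathlib

open scoped Classical

/-! The primes `p` with `⌊n / p⌋ = m` and `u ≤ {n / p} < v` are those of
`(n / (m + v), n / (m + u)]`, so by the prime number theorem their logarithms sum to
`(1 / (m + u) - 1 / (m + v) + o(1)) n`. The series `∑ (1 / (m + u) - 1 / (m + v))` telescopes to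
`ψ(v) - ψ(u)` by the recurrence `ψ(x + 1) = ψ(x) + 1 / x` and the asymptotics `ψ(x) - log x → 0`.
The limit may be taken term by term because the primes with `⌊n / p⌋ ≥ M` are at most `n / M`, and
by Chebyshev's bound `θ(x) ≤ x log 4` they contribute at most `n log 4 / M`, uniformly in `n`.

The prime number theorem itself comes from the non-vanishing of `ζ` on `re s = 1` by the
Wiener–Ikehara method. If the Laplace transform of a bounded function `f` extends continuously to
`re s = 0`, then Fourier inversion against a Fejér kernel and the Riemann–Lebesgue lemma show that
the averages `∫ f (x - t) K(t) dt` tend to zero, for Fejér kernels `K` of any width. For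
`f t = e⁻ᵗ S(eᵗ) - a` with `S` monotone, the function `f` cannot drop quickly, and letting the
width of `K` shrink to zero removes the averaging. -/

open Filter Topology MeasureTheory Complex

/-! ### The Fejér kernel -/

/-- The Fejér kernel on the real line, normalised so that it is the Fourier transform of the
triangle function `y ↦ 1 - |y|` on `[-1, 1]`. -/
noncomputable def fejerKernel (t : ℝ) : ℝ := Real.sinc (t / 2) ^ 2

lemma fejerKernel_nonneg (t : ℝ) : 0 ≤ fejerKernel t := sq_nonneg _

@[fun_prop]
lemma continuous_fejerKernel : Continuous fejerKernel :=
  (Real.continuous_sinc.comp (continuous_id.div_const 2)).pow 2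

lemma fejerKernel_le_one (t : ℝ) : fejerKernel t ≤ 1 :=
  (sq_le_one_iff_abs_le_one _).2 (Real.abs_sinc_le_one _)

lemma sq_mul_fejerKernel (t : ℝ) : t ^ 2 * fejerKernel t = 2 * (1 - Real.cos t) := by
  have half_angle : Real.cos t = 1 - 2 * Real.sin (t / 2) ^ 2 := by
    conv_lhs => rw [← mul_div_cancel₀ t two_ne_zero, Real.cos_two_mul]
    linarith [Real.sin_sq_add_cos_sq (t / 2)]
  rcases eq_or_ne t 0 with rfl | ht
  · simp
  · rw [fejerKernel, Real.sinc_of_ne_zero (by simpa using ht), half_angle]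
    field_simp
    ring

lemma fejerKernel_le_mul_inv_one_add_sq (t : ℝ) : fejerKernel t ≤ 5 * (1 + t ^ 2)⁻¹ := by
  rw [← div_eq_mul_inv, le_div_iff₀ (by positivity)]
  linarith [fejerKernel_le_one t, sq_mul_fejerKernel t, Real.neg_one_le_cos t]

lemma integrable_fejerKernel : Integrable fejerKernel :=
  (integrable_inv_one_add_sq.const_mul 5).mono' continuous_fejerKernel.aestronglyMeasurable <|
    .of_forall fun t => by
      simpa [abs_of_nonneg (fejerKernel_nonneg t)] using fejerKernel_le_mul_inv_one_add_sq t

lemma integral_fejerKernel_pos : 0 < ∫ t, fejerKernel t := by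
  rw [integral_pos_iff_support_of_nonneg fejerKernel_nonneg integrable_fejerKernel]
  exact continuous_fejerKernel.isOpen_support.measure_pos _ ⟨0, by simp [fejerKernel]⟩

lemma integral_one_sub_mul_cos (t : ℝ) :
    2 * ∫ y in (0 : ℝ)..1, (1 - y) * Real.cos (y * t) = fejerKernel t := by
  rcases eq_or_ne t 0 with rfl | ht
  · simp only [mul_zero, Real.cos_zero, mul_one]
    rw [intervalIntegral.integral_sub (by simp) (by simp), integral_id]
    norm_num [fejerKernel]
  have antideriv (y : ℝ) : HasDerivAt
      (fun y : ℝ => (1 - y) * Real.sin (y * t) / t - Real.cos (y * t) / t ^ 2)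
      ((1 - y) * Real.cos (y * t)) y := by
    have inner : HasDerivAt (fun y : ℝ => y * t) t y := by
      simpa using (hasDerivAt_id y).mul_const t
    convert! ((((hasDerivAt_id y).const_sub 1).mul inner.sin).div_const t).sub
      (inner.cos.div_const (t ^ 2)) using 1
    simp only [id]
    field_simp
    ring
  rw [intervalIntegral.integral_eq_sub_of_hasDerivAt (fun y _ => antideriv y)
    (Continuous.intervalIntegrable (by fun_prop) _ _), eq_comm,
    ← mul_left_inj' (pow_ne_zero 2 ht), mul_comm, sq_mul_fejerKernel]
  simp
  field_simp
  ring

lemma integral_triangle_mul_cexp (t : ℝ) :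
    ∫ y in (-1 : ℝ)..1, ((1 - |y| : ℝ) : ℂ) * cexp (I * y * t) = fejerKernel t := by
  have hc : Continuous fun y : ℝ => ((1 - |y| : ℝ) : ℂ) * cexp (I * y * t) := by fun_prop
  have reflect := intervalIntegral.integral_comp_neg (a := 0) (b := 1)
    (fun y : ℝ => ((1 - |y| : ℝ) : ℂ) * cexp (I * y * t))
  rw [neg_zero] at reflect
  rw [← intervalIntegral.integral_add_adjacent_intervals (b := 0)
      (hc.intervalIntegrable _ _) (hc.intervalIntegrable _ _), ← reflect,
    ← intervalIntegral.integral_add (Continuous.intervalIntegrable (by fun_prop) _ _)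
      (hc.intervalIntegrable _ _),
    ← integral_one_sub_mul_cos, ← intervalIntegral.integral_const_mul,
    ← intervalIntegral.integral_ofReal]
  refine intervalIntegral.integral_congr fun y hy => ?_
  rw [Set.uIcc_of_le zero_le_one] at hy
  have expand : 2 * Complex.cos (y * t) = cexp (I * y * t) + cexp (I * -y * t) := by
    rw [Complex.two_cos]
    ring_nf
  simp only [abs_neg, abs_of_nonneg hy.1]
  push_cast
  linear_combination -(1 - y : ℂ) * expand

lemma integral_mul_fejerKernel {μ : Measure ℝ} [SFinite μ] {g : ℝ → ℂ} (hg : Integrable g μ)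
    (x l : ℝ) :
    ∫ t, g t * fejerKernel (x - l * t) ∂μ =
      ∫ y in (-1 : ℝ)..1,
        cexp (I * y * x) * (((1 - |y| : ℝ) : ℂ) * ∫ t, g t * cexp (-(I * (l * y) * t)) ∂μ) := by
  have integrable_triangle :
      Integrable (fun y : ℝ => ((1 - |y| : ℝ) : ℂ)) (volume.restrict (Set.Ioc (-1) 1)) :=
    (Continuous.integrableOn_Icc (by fun_prop)).mono_set Set.Ioc_subset_Icc_self
  have integrable_prod : Integrable (Function.uncurry fun t y : ℝ =>
      cexp (I * y * (x - l * t)) * (g t * ((1 - |y| : ℝ) : ℂ)))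
      (μ.prod (volume.restrict (Set.Ioc (-1) 1))) := by
    have hc : Continuous fun z : ℝ × ℝ => cexp (I * z.2 * (x - l * z.1)) := by fun_prop
    refine (hg.mul_prod integrable_triangle).bdd_mul (c := 1) hc.aestronglyMeasurable ?_
    exact .of_forall fun z => by simp [Complex.norm_exp]
  simp_rw [← integral_triangle_mul_cexp, intervalIntegral.integral_of_le (neg_le_self zero_le_one)]
  refine Eq.trans (integral_congr_ae (.of_forall fun t => ?_))
    ((integral_integral_swap integrable_prod).trans (integral_congr_ae (.of_forall fun y => ?_)))
  · dsimp only
    rw [← integral_const_mul]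
    refine integral_congr_ae (.of_forall fun y => ?_)
    push_cast
    ring
  · simp_rw [← integral_const_mul]
    refine integral_congr_ae (.of_forall fun t => ?_)
    have split_phase :
        cexp (I * y * (x - l * t)) = cexp (I * y * x) * cexp (-(I * (l * y) * t)) := by
      rw [← Complex.exp_add]
      ring_nf
    simp only [split_phase]
    ring

/-! ### Laplace transforms -/

/-- The Laplace transform of a function on `(0, ∞)`, given by a convergent integral for bounded
measurable functions in the half-plane `0 < re s`. -/
noncomputable def laplace (f : ℝ → ℂ) (s : ℂ) : ℂ :=
  ∫ t in Set.Ioi (0 : ℝ), f t * cexp (-(s * t))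

lemma integrableOn_mul_cexp_neg {f : ℝ → ℂ} (hf : Measurable f) {C : ℝ} (hC : ∀ t, ‖f t‖ ≤ C)
    {s : ℂ} (hs : 0 < s.re) :
    IntegrableOn (fun t : ℝ => f t * cexp (-(s * t))) (Set.Ioi 0) := by
  simp only [← neg_mul]
  exact (integrableOn_exp_mul_complex_Ioi (a := -s) (by simpa using hs) 0).bdd_mul
    hf.aestronglyMeasurable (.of_forall hC)

lemma laplace_const (c : ℂ) {s : ℂ} (hs : 0 < s.re) : laplace (fun _ => c) s = c / s := by
  simp only [laplace, integral_const_mul, ← neg_mul]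
  rw [integral_exp_mul_complex_Ioi (by simpa using hs)]
  simp [div_eq_mul_inv]

lemma laplace_sub {f g : ℝ → ℂ} (hf : Measurable f) (hg : Measurable g) {C D : ℝ}
    (hC : ∀ t, ‖f t‖ ≤ C) (hD : ∀ t, ‖g t‖ ≤ D) {s : ℂ} (hs : 0 < s.re) :
    laplace (fun t => f t - g t) s = laplace f s - laplace g s := by
  simp only [laplace, sub_mul]
  exact integral_sub (integrableOn_mul_cexp_neg hf hC hs) (integrableOn_mul_cexp_neg hg hD hs)

lemma tendsto_laplace_nhdsGT_zero {g : ℝ → ℂ} (hg : IntegrableOn g (Set.Ioi 0)) :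
    Tendsto (fun ε : ℝ => laplace g ε) (𝓝[>] 0) (𝓝 (∫ t in Set.Ioi (0 : ℝ), g t)) := by
  refine tendsto_integral_filter_of_dominated_convergence (fun t => ‖g t‖) ?_ ?_ hg.norm ?_
  · refine .of_forall fun ε => hg.aestronglyMeasurable.mul (Continuous.aestronglyMeasurable ?_)
    fun_prop
  · filter_upwards [self_mem_nhdsWithin] with ε hε
    refine (ae_restrict_iff' measurableSet_Ioi).2 (.of_forall fun t ht => ?_)
    have decay : ‖cexp (-(ε * t))‖ ≤ 1 := by
      simpa [Complex.norm_exp] using (mul_pos hε ht).le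
    simpa using mul_le_mul_of_nonneg_left decay (norm_nonneg (g t))
  · refine .of_forall fun t => ?_
    have hc : Continuous fun ε : ℝ => g t * cexp (-(ε * t)) := by fun_prop
    simpa using (hc.tendsto 0).mono_left nhdsWithin_le_nhds

lemma tendsto_integral_mul_add_I_mul {w : ℝ → ℂ} (hw : Continuous w) {G : ℂ → ℂ}
    (hG : ContinuousOn G {s | 0 ≤ s.re}) (l a b : ℝ) :
    Tendsto (fun ε : ℝ => ∫ y in a..b, w y * G (ε + I * (l * y))) (𝓝[>] 0)
      (𝓝 (∫ y in a..b, w y * G (I * (l * y)))) := by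
  have hGc : Continuous fun z : ℝ × ℝ => G ((max z.1 0 : ℝ) + I * (l * z.2)) :=
    hG.comp_continuous (by fun_prop) fun z => by simp
  have hc := intervalIntegral.continuous_parametric_intervalIntegral_of_continuous'
    (μ := volume) (f := fun ε y : ℝ => w y * G ((max ε 0 : ℝ) + I * (l * y)))
    (.mul (by fun_prop) hGc) a b
  have extended : Tendsto (fun ε : ℝ => ∫ y in a..b, w y * G ((max ε 0 : ℝ) + I * (l * y)))
      (𝓝[>] 0) (𝓝 (∫ y in a..b, w y * G (I * (l * y)))) := by
    simpa using (hc.tendsto 0).mono_left nhdsWithin_le_nhds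
  refine extended.congr' ?_
  filter_upwards [self_mem_nhdsWithin] with ε (hε : 0 < ε)
  simp only [max_eq_left hε.le]

lemma integrable_mul_fejerKernel {f : ℝ → ℂ} (hf : Measurable f) {C : ℝ}
    (hC : ∀ t, ‖f t‖ ≤ C) (x : ℝ) {l : ℝ} (hl : l ≠ 0) :
    Integrable fun t => f t * fejerKernel (x - l * t) :=
  ((integrable_fejerKernel.comp_sub_left x).comp_mul_left' hl).ofReal.bdd_mul
    hf.aestronglyMeasurable (.of_forall hC)

lemma setIntegral_mul_fejerKernel_of_eqOn_laplace {f : ℝ → ℂ} (hf : Measurable f) {C : ℝ}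
    (hC : ∀ t, ‖f t‖ ≤ C) {G : ℂ → ℂ} (hG : ContinuousOn G {s | 0 ≤ s.re})
    (hfG : Set.EqOn (laplace f) G {s | 0 < s.re}) (x : ℝ) {l : ℝ} (hl : l ≠ 0) :
    ∫ t in Set.Ioi (0 : ℝ), f t * fejerKernel (x - l * t) =
      ∫ y in (-1 : ℝ)..1, cexp (I * y * x) * ((1 - |y| : ℝ) : ℂ) * G (I * (l * y)) := by
  refine tendsto_nhds_unique
    (tendsto_laplace_nhdsGT_zero (integrable_mul_fejerKernel hf hC x hl).integrableOn)
    ((tendsto_integral_mul_add_I_mul (by fun_prop) hG l (-1) 1).congr' ?_)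
  filter_upwards [self_mem_nhdsWithin] with ε (hε : 0 < ε)
  have re_pos (y : ℝ) : 0 < (ε + I * (l * y) : ℂ).re := by simpa using hε
  simp only [laplace, mul_right_comm _ (fejerKernel _ : ℂ)]
  rw [integral_mul_fejerKernel (integrableOn_mul_cexp_neg hf hC (s := ε) (by simpa using hε))]
  refine intervalIntegral.integral_congr fun y _ => ?_
  simp only [← hfG (re_pos y), laplace, mul_assoc, ← Complex.exp_add]
  ring_nf

lemma tendsto_setIntegral_cexp_mul {s : Set ℝ} (hs : MeasurableSet s) (f : ℝ → ℂ) :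
    Tendsto (fun x : ℝ => ∫ y in s, cexp (I * y * x) * f y) atTop (𝓝 0) := by
  have frequency : Tendsto (fun x : ℝ => -x / (2 * Real.pi)) atTop (cocompact ℝ) :=
    (tendsto_neg_atTop_atBot.atBot_div_const (by positivity)).mono_right atBot_le_cocompact
  refine ((Real.tendsto_integral_exp_smul_cocompact (s.indicator f)).comp frequency).congr
    fun x => ?_
  rw [← integral_indicator hs]
  refine integral_congr_ae (.of_forall fun y => ?_)
  by_cases hy : y ∈ s
  · simp only [Set.indicator_of_mem hy, Circle.smul_def, Real.fourierChar_apply, smul_eq_mul]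
    congr 2
    push_cast
    field_simp [Complex.ofReal_ne_zero.2 Real.pi_ne_zero]
  · simp [Set.indicator_of_notMem hy]

lemma tendsto_setIntegral_mul_fejerKernel {f : ℝ → ℂ} (hf : Measurable f) {C : ℝ}
    (hC : ∀ t, ‖f t‖ ≤ C) {G : ℂ → ℂ} (hG : ContinuousOn G {s | 0 ≤ s.re})
    (hfG : Set.EqOn (laplace f) G {s | 0 < s.re}) {l : ℝ} (hl : l ≠ 0) :
    Tendsto (fun x : ℝ => ∫ t in Set.Ioi (0 : ℝ), f t * fejerKernel (x - l * t)) atTop (𝓝 0) := by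
  simp_rw [setIntegral_mul_fejerKernel_of_eqOn_laplace hf hC hG hfG _ hl,
    intervalIntegral.integral_of_le (neg_le_self (zero_le_one' ℝ)), mul_assoc (cexp _)]
  exact tendsto_setIntegral_cexp_mul measurableSet_Ioc _

lemma integral_fejerKernel_mul_comp_sub (f : ℝ → ℂ) (x : ℝ) {r : ℝ} (hr : 0 < r) :
    ∫ t, fejerKernel t * f (x - r * t) =
      (r⁻¹ : ℝ) * ∫ u, f u * fejerKernel (r⁻¹ * x - r⁻¹ * u) := by
  have dilation := Measure.integral_comp_mul_left
    (fun s => f (r * s) * (fejerKernel (r⁻¹ * x - s) : ℂ)) r⁻¹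
  simp only [inv_inv, mul_inv_cancel_left₀ hr.ne', abs_of_pos hr] at dilation
  rw [dilation, Complex.real_smul, ← mul_assoc, ← Complex.ofReal_mul, inv_mul_cancel₀ hr.ne',
    Complex.ofReal_one, one_mul, ← integral_sub_left_eq_self _ volume (r⁻¹ * x)]
  refine integral_congr_ae (.of_forall fun s => ?_)
  simp only [mul_sub, mul_inv_cancel_left₀ hr.ne', sub_sub_cancel]
  ring

lemma tendsto_integral_mul_comp_sub {k f : ℝ → ℂ} (hk : Integrable k) (hf : Measurable f)
    {C : ℝ} (hC : ∀ t, ‖f t‖ ≤ C) {c : ℂ} (hlim : Tendsto f atTop (𝓝 c)) (r : ℝ) :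
    Tendsto (fun x : ℝ => ∫ t, k t * f (x - r * t)) atTop (𝓝 (∫ t, k t * c)) := by
  refine tendsto_integral_filter_of_dominated_convergence (fun t => ‖k t‖ * C) ?_ ?_
    (hk.norm.mul_const C) ?_
  · exact .of_forall fun x =>
      hk.aestronglyMeasurable.mul (hf.comp (by fun_prop)).aestronglyMeasurable
  · exact .of_forall fun x => .of_forall fun t =>
      (norm_mul_le _ _).trans (mul_le_mul_of_nonneg_left (hC _) (norm_nonneg _))
  · exact .of_forall fun t =>
      (hlim.comp (tendsto_atTop_add_const_right _ _ tendsto_id)).const_mul (k t)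

lemma tendsto_integral_fejerKernel_mul_of_laplace {f : ℝ → ℂ} (hf : Measurable f) {C : ℝ}
    (hC : ∀ t, ‖f t‖ ≤ C) {G : ℂ → ℂ} (hG : ContinuousOn G {s | 0 ≤ s.re})
    (hfG : Set.EqOn (laplace f) G {s | 0 < s.re}) {r : ℝ} (hr : 0 < r) :
    Tendsto (fun x : ℝ => ∫ t, fejerKernel t * f (x - r * t)) atTop (𝓝 0) := by
  set f₀ := (Set.Iic (0 : ℝ)).indicator f
  have hf₀ : Measurable f₀ := hf.indicator measurableSet_Iic
  have hC₀ (t : ℝ) : ‖f₀ t‖ ≤ C := (norm_indicator_le_norm_self _ _).trans (hC t)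
  have left_part : Tendsto (fun x : ℝ => ∫ t, fejerKernel t * f₀ (x - r * t)) atTop (𝓝 0) := by
    have vanish : Tendsto f₀ atTop (𝓝 0) := tendsto_const_nhds.congr' <| by
      filter_upwards [eventually_gt_atTop 0] with t ht
      simp [f₀, ht]
    simpa using tendsto_integral_mul_comp_sub integrable_fejerKernel.ofReal hf₀ hC₀ vanish r
  have right_part := ((tendsto_setIntegral_mul_fejerKernel hf hC hG hfG
    (inv_ne_zero hr.ne')).comp (tendsto_id.const_mul_atTop (inv_pos.2 hr))).const_mul (r⁻¹ : ℂ)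
  rw [mul_zero] at right_part
  refine (add_zero (0 : ℂ) ▸ left_part.add right_part).congr fun x => ?_
  rw [integral_fejerKernel_mul_comp_sub _ _ hr, integral_fejerKernel_mul_comp_sub _ _ hr,
    ← integral_add_compl (measurableSet_Iic (a := (0 : ℝ)))
      (integrable_mul_fejerKernel hf hC (r⁻¹ * x) (inv_ne_zero hr.ne')),
    ← integral_indicator measurableSet_Iic, Set.compl_Iic, mul_add]
  simp only [f₀, Set.indicator_mul_left, Function.comp, id, Complex.ofReal_inv]

lemma integrable_fejerKernel_mul_comp_sub {B : ℝ → ℝ} (hB : Measurable B) {C : ℝ}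
    (hC : ∀ t, |B t| ≤ C) (x r : ℝ) : Integrable fun t => fejerKernel t * B (x - r * t) :=
  integrable_fejerKernel.mul_bdd (hB.comp (by fun_prop)).aestronglyMeasurable
    (.of_forall fun _ => hC _)

lemma tendsto_integral_fejerKernel_mul {B : ℝ → ℝ} (hB : Measurable B) {C : ℝ}
    (hC : ∀ t, |B t| ≤ C) {a : ℝ} {G : ℂ → ℂ} (hG : ContinuousOn G {s | 0 ≤ s.re})
    (hBG : Set.EqOn (laplace fun t => B t - a) G {s | 0 < s.re}) {r : ℝ} (hr : 0 < r) :
    Tendsto (fun x : ℝ => ∫ t, fejerKernel t * B (x - r * t)) atTop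
      (𝓝 (a * ∫ t, fejerKernel t)) := by
  have bound (t : ℝ) : ‖(B t - a : ℂ)‖ ≤ C + |a| := by
    rw [← Complex.ofReal_sub, Complex.norm_real]
    exact (abs_sub _ _).trans (by gcongr; exact hC t)
  have centred := (Complex.continuous_re.tendsto 0).comp
    (tendsto_integral_fejerKernel_mul_of_laplace (by fun_prop) bound hG hBG hr)
  refine tendsto_sub_nhds_zero_iff.1 (centred.congr fun x => ?_)
  have real_integral : ∫ t, (fejerKernel t * (B (x - r * t) - a) : ℂ) =
      (∫ t, fejerKernel t * (B (x - r * t) - a) : ℝ) := by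
    rw [← integral_complex_ofReal]
    push_cast
    rfl
  simp only [Function.comp, real_integral, Complex.ofReal_re]
  simp only [mul_sub]
  rw [integral_sub (integrable_fejerKernel_mul_comp_sub hB hC x r)
    (integrable_fejerKernel.mul_const a), integral_mul_const, mul_comm a]

/-! ### A Tauberian theorem -/

lemma tendsto_setIntegral_Icc_fejerKernel :
    Tendsto (fun R : ℝ => ∫ t in Set.Icc (-R) R, fejerKernel t) atTop
      (𝓝 (∫ t, fejerKernel t)) :=
  (aecover_Icc tendsto_neg_atTop_atBot tendsto_id).integral_tendsto_of_countably_generated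
    integrable_fejerKernel

lemma tendsto_exp_mul_inv_atTop (k : ℝ) :
    Tendsto (fun R : ℝ => Real.exp (k * R⁻¹)) atTop (𝓝 1) := by
  simpa [Function.comp_def] using
    (Real.continuous_exp.tendsto _).comp (tendsto_inv_atTop_zero.const_mul k)

section Tauberian

variable {B : ℝ → ℝ}

lemma measurable_of_monotone_mul_exp (hmono : Monotone fun t => B t * Real.exp t) :
    Measurable B := by
  have hB : B = fun t => B t * Real.exp t / Real.exp t := by simp
  rw [hB]
  exact hmono.measurable.div Real.measurable_exp

lemma le_mul_exp_of_monotone_mul_exp (hmono : Monotone fun t => B t * Real.exp t) {s t : ℝ}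
    (hst : s ≤ t) : B s ≤ B t * Real.exp (t - s) := by
  rw [Real.exp_sub, ← mul_div_assoc, le_div_iff₀ (Real.exp_pos s)]
  exact hmono hst

variable {C : ℝ} (hmono : Monotone fun t => B t * Real.exp t) (h0 : ∀ t, 0 ≤ B t)
  (hC : ∀ t, B t ≤ C)

include hmono h0 hC

lemma mul_setIntegral_fejerKernel_le (x R : ℝ) {r : ℝ} (hr : 0 ≤ r) :
    B (x - r * R) * (Real.exp (-(2 * (r * R))) * ∫ t in Set.Icc (-R) R, fejerKernel t) ≤
      ∫ t, fejerKernel t * B (x - r * t) := by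
  have integrable_conv := integrable_fejerKernel_mul_comp_sub
    (measurable_of_monotone_mul_exp hmono) (fun t => (abs_of_nonneg (h0 t)).trans_le (hC t)) x r
  have pointwise (t : ℝ) (ht : t ∈ Set.Icc (-R) R) :
      B (x - r * R) * Real.exp (-(2 * (r * R))) ≤ B (x - r * t) := by
    have hle : r * t ≤ r * R := mul_le_mul_of_nonneg_left ht.2 hr
    have hge : r * -R ≤ r * t := mul_le_mul_of_nonneg_left ht.1 hr
    rw [Real.exp_neg, ← div_eq_mul_inv, div_le_iff₀ (Real.exp_pos _)]
    refine (le_mul_exp_of_monotone_mul_exp hmono (sub_le_sub_left hle x)).trans ?_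
    exact mul_le_mul_of_nonneg_left (Real.exp_le_exp.2 (by linarith)) (h0 _)
  rw [← mul_assoc, ← integral_const_mul]
  calc ∫ t in Set.Icc (-R) R, B (x - r * R) * Real.exp (-(2 * (r * R))) * fejerKernel t
      ≤ ∫ t in Set.Icc (-R) R, fejerKernel t * B (x - r * t) := by
        refine setIntegral_mono_on (integrable_fejerKernel.const_mul _).integrableOn
          integrable_conv.integrableOn measurableSet_Icc fun t ht => ?_
        rw [mul_comm]
        exact mul_le_mul_of_nonneg_left (pointwise t ht) (fejerKernel_nonneg t)
    _ ≤ ∫ t, fejerKernel t * B (x - r * t) :=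
        setIntegral_le_integral integrable_conv
          (.of_forall fun t => mul_nonneg (fejerKernel_nonneg t) (h0 _))

lemma integral_fejerKernel_mul_le (x R : ℝ) {r : ℝ} (hr : 0 ≤ r) :
    ∫ t, fejerKernel t * B (x - r * t) ≤
      B (x + r * R) * (Real.exp (2 * (r * R)) * ∫ t in Set.Icc (-R) R, fejerKernel t) +
        C * ((∫ t, fejerKernel t) - ∫ t in Set.Icc (-R) R, fejerKernel t) := by
  have integrable_conv := integrable_fejerKernel_mul_comp_sub
    (measurable_of_monotone_mul_exp hmono) (fun t => (abs_of_nonneg (h0 t)).trans_le (hC t)) x r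
  have pointwise (t : ℝ) (ht : t ∈ Set.Icc (-R) R) :
      B (x - r * t) ≤ B (x + r * R) * Real.exp (2 * (r * R)) := by
    have hle : r * t ≤ r * R := mul_le_mul_of_nonneg_left ht.2 hr
    have hge : r * -R ≤ r * t := mul_le_mul_of_nonneg_left ht.1 hr
    refine (le_mul_exp_of_monotone_mul_exp hmono (t := x + r * R) (by linarith)).trans ?_
    exact mul_le_mul_of_nonneg_left (Real.exp_le_exp.2 (by linarith)) (h0 _)
  rw [← integral_add_compl measurableSet_Icc integrable_conv,
    ← integral_add_compl measurableSet_Icc integrable_fejerKernel, add_sub_cancel_left,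
    ← mul_assoc, ← integral_const_mul, ← integral_const_mul]
  refine add_le_add (setIntegral_mono_on integrable_conv.integrableOn
      (integrable_fejerKernel.const_mul _).integrableOn measurableSet_Icc fun t ht => ?_)
    (integral_mono integrable_conv.integrableOn
      (integrable_fejerKernel.const_mul _).integrableOn fun t => ?_)
  · rw [mul_comm]
    exact mul_le_mul_of_nonneg_right (pointwise t ht) (fejerKernel_nonneg t)
  · rw [mul_comm C]
    exact mul_le_mul_of_nonneg_left (hC _) (fejerKernel_nonneg t)

lemma eventually_gt_of_tendsto_integral_fejerKernel_mul {a a' : ℝ}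
    (smoothed : ∀ r > 0, Tendsto (fun x : ℝ => ∫ t, fejerKernel t * B (x - r * t)) atTop
      (𝓝 (a * ∫ t, fejerKernel t))) (ha' : a' < a) : ∀ᶠ x in atTop, a' < B x := by
  have lim : Tendsto (fun R : ℝ =>
      a' * (Real.exp (2 * R⁻¹) * ∫ t in Set.Icc (-R) R, fejerKernel t) +
        C * ((∫ t, fejerKernel t) - ∫ t in Set.Icc (-R) R, fejerKernel t)) atTop
      (𝓝 (a' * ∫ t, fejerKernel t)) := by
    simpa using (((tendsto_exp_mul_inv_atTop 2).mul
      tendsto_setIntegral_Icc_fejerKernel).const_mul a').add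
        ((tendsto_setIntegral_Icc_fejerKernel.const_sub (∫ t, fejerKernel t)).const_mul C)
  obtain ⟨R, hR, R_pos⟩ := ((lim.eventually_lt_const
    (mul_lt_mul_of_pos_right ha' integral_fejerKernel_pos)).and (eventually_gt_atTop 0)).exists
  have shifted : ∀ᶠ x in atTop, a' < B (x + R⁻¹) := by
    filter_upwards [(smoothed (R⁻¹ * R⁻¹) (by positivity)).eventually_const_lt hR] with x hx
    have upper := integral_fejerKernel_mul_le hmono h0 hC x R (r := R⁻¹ * R⁻¹) (by positivity)
    rw [inv_mul_cancel_right₀ R_pos.ne'] at upper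
    exact lt_of_mul_lt_mul_right (lt_of_add_lt_add_right (hx.trans_le upper))
      (mul_nonneg (Real.exp_pos _).le
        (setIntegral_nonneg measurableSet_Icc fun t _ => fejerKernel_nonneg t))
  filter_upwards [(tendsto_atTop_add_const_right _ (-R⁻¹) tendsto_id).eventually shifted]
    with x hx
  simpa using hx

lemma eventually_lt_of_tendsto_integral_fejerKernel_mul {a a' : ℝ}
    (smoothed : ∀ r > 0, Tendsto (fun x : ℝ => ∫ t, fejerKernel t * B (x - r * t)) atTop
      (𝓝 (a * ∫ t, fejerKernel t))) (ha' : a < a') : ∀ᶠ x in atTop, B x < a' := by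
  have lim : Tendsto (fun R : ℝ =>
      a' * (Real.exp (-2 * R⁻¹) * ∫ t in Set.Icc (-R) R, fejerKernel t)) atTop
      (𝓝 (a' * ∫ t, fejerKernel t)) := by
    simpa using
      ((tendsto_exp_mul_inv_atTop (-2)).mul tendsto_setIntegral_Icc_fejerKernel).const_mul a'
  obtain ⟨R, hR, R_pos⟩ := ((lim.eventually_const_lt
    (mul_lt_mul_of_pos_right ha' integral_fejerKernel_pos)).and (eventually_gt_atTop 0)).exists
  have shifted : ∀ᶠ x in atTop, B (x - R⁻¹) < a' := by
    filter_upwards [(smoothed (R⁻¹ * R⁻¹) (by positivity)).eventually_lt_const hR] with x hx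
    have lower := mul_setIntegral_fejerKernel_le hmono h0 hC x R (r := R⁻¹ * R⁻¹) (by positivity)
    rw [inv_mul_cancel_right₀ R_pos.ne', ← neg_mul] at lower
    exact lt_of_mul_lt_mul_right (lower.trans_lt hx)
      (mul_nonneg (Real.exp_pos _).le
        (setIntegral_nonneg measurableSet_Icc fun t _ => fejerKernel_nonneg t))
  filter_upwards [(tendsto_atTop_add_const_right _ R⁻¹ tendsto_id).eventually shifted]
    with x hx
  simpa using hx

theorem tendsto_of_eqOn_laplace {a : ℝ} {G : ℂ → ℂ} (hG : ContinuousOn G {s | 0 ≤ s.re})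
    (hBG : Set.EqOn (laplace fun t => B t - a) G {s | 0 < s.re}) :
    Tendsto B atTop (𝓝 a) := by
  have smoothed (r : ℝ) (hr : r > 0) := tendsto_integral_fejerKernel_mul
    (measurable_of_monotone_mul_exp hmono) (fun t => (abs_of_nonneg (h0 t)).trans_le (hC t))
    hG hBG hr
  exact tendsto_order.2
    ⟨fun _ => eventually_gt_of_tendsto_integral_fejerKernel_mul hmono h0 hC smoothed,
      fun _ => eventually_lt_of_tendsto_integral_fejerKernel_mul hmono h0 hC smoothed⟩

end Tauberian

/-! ### The Wiener–Ikehara theorem -/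

/-- The summatory function of an arithmetic function; the term `f 0` is not counted. -/
noncomputable def summatory (f : ℕ → ℝ) (x : ℝ) : ℝ := ∑ k ∈ Finset.Icc 1 ⌊x⌋₊, f k

section WienerIkehara

variable {f : ℕ → ℝ}

lemma summatory_nonneg (hf : ∀ n, 0 ≤ f n) (x : ℝ) : 0 ≤ summatory f x :=
  Finset.sum_nonneg fun k _ => hf k

lemma summatory_mono (hf : ∀ n, 0 ≤ f n) : Monotone (summatory f) := fun _ _ hxy =>
  Finset.sum_le_sum_of_subset_of_nonneg
    (Finset.Icc_subset_Icc_right (Nat.floor_mono hxy)) fun k _ _ => hf k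

lemma LSeries_eq_mul_laplace (hf : ∀ n, 0 ≤ f n) {C : ℝ} (hC : ∀ x ≥ 0, summatory f x ≤ C * x)
    {s : ℂ} (hs : 0 < s.re) :
    LSeries (fun n => f n) (s + 1) =
      (s + 1) * laplace (fun t => ((summatory f (Real.exp t) / Real.exp t : ℝ) : ℂ)) s := by
  have linear_growth : (fun n : ℕ => ∑ k ∈ Finset.Icc 1 n, f k) =O[atTop]
      fun n : ℕ => (n : ℝ) ^ (1 : ℝ) := by
    refine Asymptotics.IsBigO.of_bound C (.of_forall fun n => ?_)
    have hn := hC n n.cast_nonneg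
    rw [summatory, Nat.floor_natCast] at hn
    rwa [Real.norm_of_nonneg (Finset.sum_nonneg fun k _ => hf k), Real.rpow_one,
      Real.norm_of_nonneg n.cast_nonneg]
  rw [LSeries_eq_mul_integral_of_nonneg f zero_le_one (by simpa using hs) linear_growth hf,
    ← Real.exp_zero, ← integral_comp_exp_Ioi, laplace]
  refine congrArg _ (integral_congr_ae (.of_forall fun t => ?_))
  have exponent : (Real.exp t : ℂ) * (Real.exp t : ℂ) ^ (-(s + 1 + 1)) =
      (Real.exp t : ℂ)⁻¹ * cexp (-(s * t)) := by
    rw [Complex.cpow_def_of_ne_zero (by simp), ← Complex.ofReal_log (Real.exp_pos t).le,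
      Real.log_exp, Complex.ofReal_exp, ← Complex.exp_neg, ← Complex.exp_add, ← Complex.exp_add]
    ring_nf
  simp only [Complex.real_smul, summatory]
  push_cast at exponent ⊢
  linear_combination (∑ k ∈ Finset.Icc 1 ⌊Real.exp t⌋₊, (f k : ℂ)) * exponent

theorem tendsto_summatory_div (hf : ∀ n, 0 ≤ f n) {C : ℝ} (hC : ∀ x ≥ 0, summatory f x ≤ C * x)
    {a : ℝ} {F : ℂ → ℂ} (hF : ContinuousOn F {s | 1 ≤ s.re})
    (hfF : Set.EqOn F (fun s => LSeries (fun n => f n) s - a / (s - 1)) {s | 1 < s.re}) :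
    Tendsto (fun x => summatory f x / x) atTop (𝓝 a) := by
  set B : ℝ → ℝ := fun t => summatory f (Real.exp t) / Real.exp t
  have hmono : Monotone fun t => B t * Real.exp t := by
    simpa [B, Function.comp_def] using (summatory_mono hf).comp Real.exp_monotone
  have h0 (t : ℝ) : 0 ≤ B t := div_nonneg (summatory_nonneg hf _) (Real.exp_pos t).le
  have hBC (t : ℝ) : B t ≤ C := (div_le_iff₀ (Real.exp_pos t)).2 (hC _ (Real.exp_pos t).le)
  have hG : ContinuousOn (fun s => (F (s + 1) - a) / (s + 1)) {s : ℂ | 0 ≤ s.re} := by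
    refine ((hF.comp (by fun_prop) fun s hs => ?_).sub continuousOn_const).div (by fun_prop)
      fun s hs => ?_
    · simpa using hs
    · exact ne_zero_of_re_pos (by simpa using add_pos_of_nonneg_of_pos hs one_pos)
  have hBG : Set.EqOn (laplace fun t => B t - a) (fun s => (F (s + 1) - a) / (s + 1))
      {s : ℂ | 0 < s.re} := by
    intro s (hs : 0 < s.re)
    have hs0 : s ≠ 0 := ne_zero_of_re_pos hs
    have hs1 : s + 1 ≠ 0 := ne_zero_of_re_pos (by simpa using add_pos hs one_pos)
    have hB := measurable_of_monotone_mul_exp hmono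
    have extension : F (s + 1) = (s + 1) * laplace (fun t => B t) s - a / s := by
      rw [hfF (show 1 < (s + 1).re by simpa using hs)]
      simp only [add_sub_cancel_right, LSeries_eq_mul_laplace hf hC hs, B]
    rw [laplace_sub (f := fun t => B t) (C := C) (by fun_prop) measurable_const
      (fun t => by simpa [abs_of_nonneg (h0 t)] using hBC t) (fun _ => le_rfl) hs,
      laplace_const _ hs]
    simp only [extension]
    field_simp
    ring
  refine ((tendsto_of_eqOn_laplace hmono h0 hBC hG hBG).comp Real.tendsto_log_atTop).congr' ?_
  filter_upwards [eventually_gt_atTop 0] with x hx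
  simp only [B, Function.comp, Real.exp_log hx]

end WienerIkehara

/-! ### The prime number theorem -/

open ArithmeticFunction in
theorem tendsto_psi_div : Tendsto (fun x => Chebyshev.psi x / x) atTop (𝓝 1) := by
  refine tendsto_summatory_div (f := fun n => vonMangoldt n) (fun _ => vonMangoldt_nonneg)
    (fun x hx => Chebyshev.psi_le_const_mul_self hx)
    (vonMangoldt.continuousOn_LFunctionResidueClassAux (q := 1) 1) fun s hs => ?_
  rw [vonMangoldt.eqOn_LFunctionResidueClassAux (q := 1) isUnit_one hs]
  have every_class (n : ℕ) : vonMangoldt.residueClass (1 : ZMod 1) n = vonMangoldt n :=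
    Set.indicator_of_mem (s := {n : ℕ | (n : ZMod 1) = 1}) (Subsingleton.elim _ _) _
  simp [every_class]

theorem tendsto_theta_div : Tendsto (fun x => Chebyshev.theta x / x) atTop (𝓝 1) := by
  obtain ⟨C, hC⟩ := Chebyshev.psi_sub_theta_le_mul_sqrt
  have gap : Tendsto (fun x => (Chebyshev.psi x - Chebyshev.theta x) / x) atTop (𝓝 0) := by
    refine squeeze_zero' (g := fun x => C / √x) ?_ ?_
      (tendsto_const_nhds.div_atTop Real.tendsto_sqrt_atTop)
    · filter_upwards [eventually_ge_atTop 0] with x hx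
      exact div_nonneg (sub_nonneg.2 (Chebyshev.theta_le_psi x)) hx
    · filter_upwards [eventually_ge_atTop 0] with x hx
      calc (Chebyshev.psi x - Chebyshev.theta x) / x ≤ C * √x / x := by
            gcongr
            exact hC x
        _ = C / √x := by rw [mul_div_assoc, Real.sqrt_div_self', mul_one_div]
  simpa [← sub_div] using tendsto_psi_div.sub gap

lemma tendsto_theta_comp_div_div {b : ℝ} (hb : 0 < b) :
    Tendsto (fun x => Chebyshev.theta (x / b) / x) atTop (𝓝 (1 / b)) := by
  refine ((tendsto_theta_div.comp (tendsto_id.atTop_div_const hb)).div_const b).congr fun x => ?_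
  simp only [Function.comp, id]
  rw [div_div, div_mul_cancel₀ x hb.ne']

/-! ### The digamma function -/

lemma hasDerivAt_log_Gamma {x : ℝ} (hx : 0 < x) :
    HasDerivAt (Real.log ∘ Real.Gamma) (logDeriv Real.Gamma x) x :=
  (Real.differentiableAt_Gamma fun m => by
    linarith [m.cast_nonneg (α := ℝ)]).hasDerivAt.log (Real.Gamma_pos_of_pos hx).ne'

lemma log_Gamma_add_one {x : ℝ} (hx : 0 < x) :
    Real.log (Real.Gamma (x + 1)) = Real.log (Real.Gamma x) + Real.log x := by
  rw [Real.Gamma_add_one hx.ne', mul_comm, Real.log_mul (Real.Gamma_pos_of_pos hx).ne' hx.ne']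

lemma logDeriv_Gamma_add_one {x : ℝ} (hx : 0 < x) :
    logDeriv Real.Gamma (x + 1) = logDeriv Real.Gamma x + x⁻¹ := by
  have recurrence : (fun y => Real.log (Real.Gamma (y + 1))) =ᶠ[𝓝 x]
      fun y => Real.log (Real.Gamma y) + Real.log y := by
    filter_upwards [lt_mem_nhds hx] with y hy using log_Gamma_add_one hy
  exact ((hasDerivAt_log_Gamma (add_pos hx one_pos)).comp_add_const x 1).unique
    (((hasDerivAt_log_Gamma hx).add (Real.hasDerivAt_log hx.ne')).congr_of_eventuallyEq recurrence)

lemma logDeriv_Gamma_add_natCast {x : ℝ} (hx : 0 < x) (M : ℕ) :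
    logDeriv Real.Gamma (x + M) = logDeriv Real.Gamma x + ∑ m ∈ Finset.range M, 1 / (m + x) := by
  induction M with
  | zero => simp
  | succ M ih =>
    rw [Nat.cast_succ, ← add_assoc, logDeriv_Gamma_add_one (by positivity), ih,
      Finset.sum_range_succ, add_assoc, add_comm x, one_div (M + x)]

lemma slope_log_Gamma {x : ℝ} (hx : 0 < x) :
    slope (Real.log ∘ Real.Gamma) x (x + 1) = Real.log x := by
  simp [slope_def_field, log_Gamma_add_one hx]

lemma logDeriv_Gamma_le_log {x : ℝ} (hx : 0 < x) : logDeriv Real.Gamma x ≤ Real.log x :=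
  slope_log_Gamma hx ▸ Real.convexOn_log_Gamma.le_slope_of_hasDerivAt hx (add_pos hx one_pos)
    (lt_add_one x) (hasDerivAt_log_Gamma hx)

lemma log_le_logDeriv_Gamma_add_one {x : ℝ} (hx : 0 < x) :
    Real.log x ≤ logDeriv Real.Gamma (x + 1) :=
  slope_log_Gamma hx ▸ Real.convexOn_log_Gamma.slope_le_of_hasDerivAt hx (add_pos hx one_pos)
    (lt_add_one x) (hasDerivAt_log_Gamma (add_pos hx one_pos))

lemma tendsto_log_sub_logDeriv_Gamma :
    Tendsto (fun x => Real.log x - logDeriv Real.Gamma x) atTop (𝓝 0) := by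
  refine squeeze_zero' ?_ ?_ tendsto_inv_atTop_zero
  · filter_upwards [eventually_gt_atTop 0] with x hx
    exact sub_nonneg.2 (logDeriv_Gamma_le_log hx)
  · filter_upwards [eventually_gt_atTop 0] with x hx
    rw [sub_le_iff_le_add', ← logDeriv_Gamma_add_one hx]
    exact log_le_logDeriv_Gamma_add_one hx

lemma tendsto_log_sub_sum_one_div {x : ℝ} (hx : 0 < x) :
    Tendsto (fun M : ℕ => Real.log M - ∑ m ∈ Finset.range M, 1 / (m + x)) atTop
      (𝓝 (logDeriv Real.Gamma x)) := by
  have shifted := tendsto_log_sub_logDeriv_Gamma.comp (tendsto_atTop_add_const_right _ x tendsto_id)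
  have limit := ((shifted.sub (Real.tendsto_log_comp_add_sub_log x)).add_const
    (logDeriv Real.Gamma x)).comp tendsto_natCast_atTop_atTop
  simp only [sub_zero, zero_add] at limit
  refine limit.congr fun M => ?_
  simp only [Function.comp, id, add_comm (M : ℝ) x, logDeriv_Gamma_add_natCast hx]
  ring

lemma tendsto_sum_one_div_sub_one_div {u v : ℝ} (hu : 0 < u) (hv : 0 < v) :
    Tendsto (fun M : ℕ => ∑ m ∈ Finset.range M, (1 / (m + u) - 1 / (m + v))) atTop
      (𝓝 (logDeriv Real.Gamma v - logDeriv Real.Gamma u)) := by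
  refine ((tendsto_log_sub_sum_one_div hv).sub (tendsto_log_sub_sum_one_div hu)).congr fun M => ?_
  rw [Finset.sum_sub_distrib]
  ring

/-! ### Primes with prescribed fractional part -/

/-- The primes `p` with `u ≤ {x / p} < v`. When `0 < u` and `0 ≤ x`, these conditions force
`p ≤ x / u`, which is built in to obtain a `Finset`. -/
noncomputable def fractPrimes (u v x : ℝ) : Finset ℕ :=
  {p ∈ Nat.primesLE ⌊x / u⌋₊ | Int.fract (x / p) ∈ Set.Ico u v}

lemma mem_Ico_natCast_add_iff {u v y : ℝ} (hu : 0 ≤ u) (hv : v ≤ 1) (hy : 0 ≤ y) (m : ℕ) :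
    y ∈ Set.Ico (m + u) (m + v) ↔ Int.fract y ∈ Set.Ico u v ∧ ⌊y⌋₊ = m := by
  have hfract : Int.fract y = y - ⌊y⌋₊ := by rw [Int.fract, natCast_floor_eq_intCast_floor hy]
  rw [hfract]
  constructor
  · rintro ⟨hmu, hmv⟩
    obtain rfl : ⌊y⌋₊ = m := (Nat.floor_eq_iff hy).2 ⟨by linarith, by linarith⟩
    exact ⟨⟨by linarith, by linarith⟩, rfl⟩
  · rintro ⟨⟨hmu, hmv⟩, rfl⟩
    exact ⟨by linarith, by linarith⟩

lemma theta_sub_theta {a b : ℝ} (hab : a ≤ b) :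
    Chebyshev.theta b - Chebyshev.theta a =
      ∑ p ∈ Nat.primesLE ⌊b⌋₊ with a < (p : ℕ), Real.log p := by
  have hle : {p ∈ Nat.primesLE ⌊b⌋₊ | ¬ a < (p : ℕ)} = Nat.primesLE ⌊a⌋₊ := by
    ext p
    simp only [Finset.mem_filter, Nat.mem_primesLE, not_lt]
    constructor
    · rintro ⟨⟨-, hp⟩, hpa⟩
      exact ⟨Nat.le_floor hpa, hp⟩
    · rintro ⟨hpa, hp⟩
      exact ⟨⟨hpa.trans (Nat.floor_mono hab), hp⟩, (Nat.le_floor_iff' hp.ne_zero).1 hpa⟩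
  rw [Chebyshev.theta_eq_sum_primesLE, Chebyshev.theta_eq_sum_primesLE, sub_eq_iff_eq_add, ← hle,
    Finset.sum_filter_add_sum_filter_not]

section PrimeSum

variable {u v x : ℝ}

lemma mem_fractPrimes (hu : 0 < u) (hx : 0 ≤ x) {p : ℕ} :
    p ∈ fractPrimes u v x ↔ p.Prime ∧ Int.fract (x / p) ∈ Set.Ico u v := by
  rw [fractPrimes, Finset.mem_filter, Nat.mem_primesLE, and_assoc, and_iff_right_of_imp]
  rintro ⟨hp, hup, -⟩
  have fract_le : Int.fract (x / p) ≤ x / p :=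
    sub_le_self _ (Int.cast_nonneg (Int.floor_nonneg.2 (by positivity)))
  exact Nat.le_floor ((le_div_comm₀ hu (by exact_mod_cast hp.pos)).1 (hup.trans fract_le))

lemma tsum_log_eq_sum_fractPrimes (hu : 0 < u) (hx : 0 ≤ x) :
    (∑' p : ℕ, if p.Prime ∧ u ≤ Int.fract (x / p) ∧ Int.fract (x / p) < v then Real.log p else 0) =
      ∑ p ∈ fractPrimes u v x, Real.log p := by
  refine (tsum_eq_sum fun p hp => if_neg fun h => hp ((mem_fractPrimes hu hx).2 h)).trans ?_
  exact Finset.sum_congr rfl fun p hp => if_pos ((mem_fractPrimes hu hx).1 hp)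

lemma filter_fractPrimes_floor_eq (hu : 0 < u) (huv : u ≤ v) (hv : v ≤ 1) (hx : 0 ≤ x) (m : ℕ) :
    {p ∈ fractPrimes u v x | ⌊x / (p : ℕ)⌋₊ = m} =
      {p ∈ Nat.primesLE ⌊x / (m + u)⌋₊ | x / (m + v) < (p : ℕ)} := by
  ext p
  simp only [Finset.mem_filter, mem_fractPrimes hu hx, Nat.mem_primesLE, and_assoc,
    and_left_comm (b := p.Prime), and_congr_right_iff]
  intro hp
  have hp0 : (0 : ℝ) < p := by exact_mod_cast hp.pos
  have hv0 : 0 < v := hu.trans_le huv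
  rw [← mem_Ico_natCast_add_iff hu.le hv (by positivity), Set.mem_Ico,
    Nat.le_floor_iff (by positivity), le_div_comm₀ (by positivity) hp0,
    div_lt_comm₀ hp0 (by positivity)]

lemma sum_fractPrimes_floor_lt (hu : 0 < u) (huv : u ≤ v) (hv : v ≤ 1) (hx : 0 ≤ x) (M : ℕ) :
    ∑ p ∈ fractPrimes u v x with ⌊x / (p : ℕ)⌋₊ < M, Real.log p = ∑ m ∈ Finset.range M,
      (Chebyshev.theta (x / (m + u)) - Chebyshev.theta (x / (m + v))) := by
  rw [← Finset.sum_fiberwise_of_maps_to (t := Finset.range M) (g := fun p : ℕ => ⌊x / p⌋₊)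
    fun p hp => Finset.mem_range.2 (Finset.mem_filter.1 hp).2]
  refine Finset.sum_congr rfl fun m hm => ?_
  rw [theta_sub_theta (by gcongr), ← filter_fractPrimes_floor_eq hu huv hv hx, Finset.filter_filter]
  congr! 2 with p
  simpa using fun h => h ▸ Finset.mem_range.1 hm

lemma sum_fractPrimes_le_floor_le (hu : 0 < u) (hx : 0 ≤ x) {M : ℕ} (hM : 0 < M) :
    ∑ p ∈ fractPrimes u v x with M ≤ ⌊x / (p : ℕ)⌋₊, Real.log p ≤ Real.log 4 * (x / M) := by
  have hsub : {p ∈ fractPrimes u v x | M ≤ ⌊x / (p : ℕ)⌋₊} ⊆ Nat.primesLE ⌊x / M⌋₊ := by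
    intro p hp
    obtain ⟨hp, hMp⟩ := Finset.mem_filter.1 hp
    have hprime := ((mem_fractPrimes hu hx).1 hp).1
    rw [Nat.le_floor_iff (by positivity), le_div_comm₀ (by positivity)
      (by exact_mod_cast hprime.pos)] at hMp
    exact Nat.mem_primesLE.2 ⟨Nat.le_floor hMp, hprime⟩
  calc ∑ p ∈ fractPrimes u v x with M ≤ ⌊x / (p : ℕ)⌋₊, Real.log p
      ≤ ∑ p ∈ Nat.primesLE ⌊x / M⌋₊, Real.log p :=
        Finset.sum_le_sum_of_subset_of_nonneg hsub fun p _ _ => Real.log_natCast_nonneg p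
    _ = Chebyshev.theta (x / M) := (Chebyshev.theta_eq_sum_primesLE _).symm
    _ ≤ Real.log 4 * (x / M) := Chebyshev.theta_le_log4_mul_x (by positivity)

lemma abs_sum_fractPrimes_sub_le (hu : 0 < u) (huv : u ≤ v) (hv : v ≤ 1) (hx : 0 ≤ x) {M : ℕ}
    (hM : 0 < M) :
    |∑ p ∈ fractPrimes u v x, Real.log p - ∑ m ∈ Finset.range M,
      (Chebyshev.theta (x / (m + u)) - Chebyshev.theta (x / (m + v)))| ≤ Real.log 4 * (x / M) := by
  rw [← sum_fractPrimes_floor_lt hu huv hv hx,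
    ← Finset.sum_filter_add_sum_filter_not (fractPrimes u v x) (fun p => ⌊x / p⌋₊ < M),
    add_sub_cancel_left, abs_of_nonneg (Finset.sum_nonneg fun p _ => Real.log_natCast_nonneg p)]
  simpa only [not_lt] using sum_fractPrimes_le_floor_le hu hx hM

lemma tendstoUniformlyOnFilter_sum_theta_div (hu : 0 < u) (huv : u ≤ v) (hv : v ≤ 1) :
    TendstoUniformlyOnFilter
      (fun (M : ℕ) x => (∑ m ∈ Finset.range M,
        (Chebyshev.theta (x / (m + u)) - Chebyshev.theta (x / (m + v)))) / x)
      (fun x => (∑ p ∈ fractPrimes u v x, Real.log p) / x) atTop atTop := by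
  rw [Metric.tendstoUniformlyOnFilter_iff]
  intro ε hε
  have hlim : Tendsto (fun M : ℕ => Real.log 4 / M) atTop (𝓝 0) :=
    tendsto_const_nhds.div_atTop tendsto_natCast_atTop_atTop
  filter_upwards [((hlim.eventually_lt_const hε).and (eventually_gt_atTop 0)).prod_mk
    (eventually_gt_atTop (0 : ℝ))] with ⟨M, x⟩ ⟨⟨hMε, hM⟩, hx⟩
  refine lt_of_le_of_lt ?_ hMε
  rw [Real.dist_eq, ← sub_div, abs_div, abs_of_pos hx, div_le_iff₀ hx, div_mul_eq_mul_div,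
    mul_div_assoc]
  exact abs_sum_fractPrimes_sub_le hu huv hv hx.le hM

lemma tendsto_sum_theta_div (hu : 0 < u) (hv : 0 < v) (M : ℕ) :
    Tendsto (fun x => (∑ m ∈ Finset.range M,
      (Chebyshev.theta (x / (m + u)) - Chebyshev.theta (x / (m + v)))) / x) atTop
      (𝓝 (∑ m ∈ Finset.range M, (1 / (m + u) - 1 / (m + v)))) := by
  simp only [Finset.sum_div, sub_div]
  exact tendsto_finsetSum _ fun m _ => (tendsto_theta_comp_div_div (by positivity)).sub
    (tendsto_theta_comp_div_div (by positivity))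

theorem tendsto_sum_fractPrimes_div (hu : 0 < u) (huv : u ≤ v) (hv : v ≤ 1) :
    Tendsto (fun x => (∑ p ∈ fractPrimes u v x, Real.log p) / x) atTop
      (𝓝 (logDeriv Real.Gamma v - logDeriv Real.Gamma u)) :=
  have hv0 : 0 < v := hu.trans_le huv
  (tendstoUniformlyOnFilter_sum_theta_div hu huv hv).tendsto_of_eventually_tendsto
    (.of_forall (tendsto_sum_theta_div hu hv0)) (tendsto_sum_one_div_sub_one_div hu hv0)

end PrimeSum

theorem nesterenko_prime_sum_general {u v : ℝ} (hu : 0 < u) (huv : u ≤ v) (hv : v ≤ 1) :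
    Tendsto
      (fun x : ℝ => (1 / x) *
        ∑' p : ℕ,
          if p.Prime ∧ u ≤ Int.fract (x / p) ∧ Int.fract (x / p) < v then Real.log p else 0)
      atTop (𝓝 (deriv Real.Gamma v / Real.Gamma v - deriv Real.Gamma u / Real.Gamma u)) := by
  refine (tendsto_sum_fractPrimes_div hu huv hv).congr' ?_
  filter_upwards [eventually_ge_atTop 0] with x hx
  rw [tsum_log_eq_sum_fractPrimes hu hx, one_div_mul_eq_div]

theorem nesterenko_prime_sum (u v : ℝ) (hu : 0 < u) (huv : u < v) (hv : v < 1) :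
    Filter.Tendsto
      (fun n : ℕ => (1 / (n : ℝ)) *
        ∑' p : ℕ,
          if p.Prime ∧ u ≤ Int.fract ((n : ℝ) / (p : ℝ)) ∧ Int.fract ((n : ℝ) / (p : ℝ)) < v
          then Real.log p else 0)
      Filter.atTop
      (nhds ((deriv Real.Gamma v / Real.Gamma v) - (deriv Real.Gamma u / Real.Gamma u))) :=
  (nesterenko_prime_sum_general hu huv.le hv.le).comp tendsto_natCast_atTop_atTop
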